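/- Anisotropic Sobolev embedding: there is a constant C (depending on p, q, s) such that for all f ∈ C_c^∞(ℝ²), ‖f‖_{L^q(ℝ²)} ≤ C ‖|∂ₓ|^{s/2}|∂_y|^{s/2} f‖_{L^p(ℝ²)} whenever 1 < p ≤ q < ∞, 0 ≤ s < 1, and 1/q = 1/p − s/2. -/

import Mathlib

/-!
With `α = s / 2` in `(0, 1/2)`, the estimate is the Hardy–Littlewood–Sobolev inequality for the
product kernel `|x|^(α-1) |y|^(α-1)`, applied to the derivative; the case `s = 0` is Fourier
inversion.

**Kernel.** Up to a constant, `|x|^(α-1)` is the superposition `kern α x = ∫₀^∞ u^(α-1) gk u x du` of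
normalised Gaussians, and the superposition of their Fourier transforms `exp (-π u² ξ²)` is a
multiple of `|ξ|^(-α)`. For a test function `f` the symbol times `ft f` is integrable, so Fubini's
theorem and Fourier inversion give `c ‖f‖ ≤ (kern α ⊗ kern α) * ‖anisoDeriv s f‖` pointwise
(`enorm_le_potential`). Working with Gaussians at each fixed width avoids defining the Fourier
transform of the non-integrable kernel. Mathlib's Fourier theory is available on inner product
spaces, which `ℝ × ℝ` is not, so inversion is transported along `ℂ ≃ ℝ × ℝ` (`exists_schwartz`).

**One variable.** A Gaussian of width `u` has mass at most `min 1 (|A| / u)` on a set `A`, whence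
`∫_A kern α (x - y) dx ≤ C |A|^α` uniformly in `y` (`lintegral_kern_set`). The bilinear form on
indicators of `A` and `B` is thus at most `C min (|A| |B|^α) (|A|^α |B|)`. Decomposing both arguments
into superlevel sets, splitting the levels along `b = a^(p/r)` and using Hölder's inequality in the
inner level gives `∬ f(x) kern α (x - y) h(y) ≤ C ‖f‖_p ‖h‖_r` when `1/p + 1/r = 1 + α`
(`form_le`), without interpolation or maximal functions.

**Two variables.** Using the one-variable inequality first in the second coordinates and then in the
first ones gives the same bound for the product kernel (`form₂_le`). The theorem follows by duality,
testing the pointwise bound against `|f|^(q-1)`.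
-/

open MeasureTheory Real Complex Filter
open scoped ENNReal

/-- The Fourier transform on `ℝ²`. -/
noncomputable def ft (f : ℝ × ℝ → ℂ) : ℝ × ℝ → ℂ := fun ξ =>
  ∫ x : ℝ × ℝ, Complex.exp (-2 * Real.pi * (x.1 * ξ.1 + x.2 * ξ.2) * Complex.I) * f x

/-- The inverse Fourier transform on `ℝ²`. -/
noncomputable def ftInv (f : ℝ × ℝ → ℂ) : ℝ × ℝ → ℂ := fun x =>
  ∫ ξ : ℝ × ℝ, Complex.exp (2 * Real.pi * (x.1 * ξ.1 + x.2 * ξ.2) * Complex.I) * f ξ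

/-- The anisotropic derivative `|∂ₓ|^{s/2}|∂_y|^{s/2}`, the Fourier multiplier with
symbol `|ξ|^{s/2}|η|^{s/2}`. -/
noncomputable def anisoDeriv (s : ℝ) (f : ℝ × ℝ → ℂ) : ℝ × ℝ → ℂ :=
  ftInv (fun p : ℝ × ℝ => ((|p.1| ^ (s/2) * |p.2| ^ (s/2) : ℝ) : ℂ) * ft f p)

/-! ### The Gaussian kernel -/

/-- The one-dimensional Gaussian of width `u`, with integral `1` when `u > 0`. -/
noncomputable def gk (u x : ℝ) : ℝ := u⁻¹ * Real.exp (-(Real.pi / u ^ 2) * x ^ 2)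

/-- The Gaussian superposition `∫₀^∞ u^(α-1) gk u x du`. For `0 < α < 1` and `x ≠ 0` it is a
constant multiple of the Riesz kernel `|x|^(α-1)`; only the superposition is used. It takes values
in `ℝ≥0∞`, and is `∞` at `x = 0`. -/
noncomputable def kern (α x : ℝ) : ℝ≥0∞ :=
  ∫⁻ u in Set.Ioi (0 : ℝ), ENNReal.ofReal (u ^ (α - 1) * gk u x)

lemma measurable_gk : Measurable (fun z : ℝ × ℝ => gk z.1 z.2) := by
  unfold gk; fun_prop

lemma measurable_kern_integrand (α : ℝ) :
    Measurable (fun z : ℝ × ℝ => ENNReal.ofReal (z.2 ^ (α - 1) * gk z.2 z.1)) := by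
  have := measurable_gk.comp measurable_swap
  apply ENNReal.measurable_ofReal.comp
  exact (measurable_snd.pow_const _).mul this

lemma measurable_kern (α : ℝ) : Measurable (kern α) := by
  unfold kern
  exact Measurable.lintegral_prod_right (measurable_kern_integrand α)

lemma gk_nonneg {u : ℝ} (hu : 0 < u) (x : ℝ) : 0 ≤ gk u x := by
  unfold gk; positivity

lemma gk_le {u : ℝ} (hu : 0 < u) (x : ℝ) : gk u x ≤ u⁻¹ := by
  unfold gk
  have : Real.exp (-(Real.pi / u ^ 2) * x ^ 2) ≤ 1 := by
    rw [Real.exp_le_one_iff]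
    have : 0 ≤ Real.pi / u ^ 2 * x ^ 2 := by positivity
    linarith
  exact mul_le_of_le_one_right (by positivity) this

lemma gk_neg (u x : ℝ) : gk u (-x) = gk u x := by simp [gk]

lemma kern_neg (α x : ℝ) : kern α (-x) = kern α x := by simp [kern, gk_neg]

lemma integrable_gk {u : ℝ} (hu : 0 < u) : Integrable (gk u) := by
  unfold gk
  exact (integrable_exp_neg_mul_sq (by positivity)).const_mul _

lemma integral_gk {u : ℝ} (hu : 0 < u) : ∫ x, gk u x = 1 := by
  unfold gk
  rw [integral_const_mul, integral_gaussian]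
  have : Real.pi / (Real.pi / u ^ 2) = u ^ 2 := by
    field_simp
  rw [this, Real.sqrt_sq hu.le]
  field_simp

lemma lintegral_gk {u : ℝ} (hu : 0 < u) (y : ℝ) :
    ∫⁻ x, ENNReal.ofReal (gk u (x - y)) = 1 := by
  rw [lintegral_sub_right_eq_self (fun x => ENNReal.ofReal (gk u x)) y,
    ← ofReal_integral_eq_lintegral_ofReal (integrable_gk hu)
      (Eventually.of_forall fun x => gk_nonneg hu x), integral_gk hu, ENNReal.ofReal_one]

/-- The mass of the Gaussian on a set is at most `1` and at most the measure of the set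
divided by `u`. -/
lemma lintegral_gk_set {u : ℝ} (hu : 0 < u) (y : ℝ) (A : Set ℝ) :
    ∫⁻ x in A, ENNReal.ofReal (gk u (x - y)) ≤ min 1 (volume A * ENNReal.ofReal u⁻¹) := by
  refine le_min ?_ ?_
  · exact (setLIntegral_le_lintegral _ _).trans (lintegral_gk hu y).le
  · calc _ ≤ ∫⁻ x in A, ENNReal.ofReal u⁻¹ :=
          lintegral_mono fun x => ENNReal.ofReal_le_ofReal (gk_le hu _)
      _ = _ := by rw [setLIntegral_const, mul_comm]

lemma lintegral_rpow_Ioc {a β : ℝ} (ha : 0 < a) (hβ : 0 < β) :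
    ∫⁻ u in Set.Ioc 0 a, ENNReal.ofReal (u ^ (β - 1)) = ENNReal.ofReal (a ^ β / β) := by
  rw [← ofReal_integral_eq_lintegral_ofReal]
  · rw [← intervalIntegral.integral_of_le ha.le, integral_rpow (Or.inl (by linarith))]
    rw [sub_add_cancel, Real.zero_rpow hβ.ne', sub_zero]
  · exact (intervalIntegrable_iff_integrableOn_Ioc_of_le ha.le).1
      (intervalIntegral.intervalIntegrable_rpow' (by linarith))
  · exact (ae_restrict_iff' measurableSet_Ioc).2
      (Eventually.of_forall fun u hu => Real.rpow_nonneg hu.1.le _)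

lemma lintegral_rpow_Ioi {a β : ℝ} (ha : 0 < a) (hβ : β < 0) :
    ∫⁻ u in Set.Ioi a, ENNReal.ofReal (u ^ (β - 1)) = ENNReal.ofReal (a ^ β / (-β)) := by
  rw [← ofReal_integral_eq_lintegral_ofReal]
  · rw [integral_Ioi_rpow_of_lt (by linarith) ha, sub_add_cancel, div_neg, neg_div]
  · exact integrableOn_Ioi_rpow_of_lt (by linarith) ha
  · exact (ae_restrict_iff' measurableSet_Ioi).2
      (Eventually.of_forall fun u hu => Real.rpow_nonneg (ha.trans hu).le _)

/-- Optimising over the width `u` of the Gaussian: `∫_A kern α (x - y) dx ≲ |A|^α`,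
uniformly in `y`. -/
lemma lintegral_kern_set {α : ℝ} (h0 : 0 < α) (h1 : α < 1) (y : ℝ) (A : Set ℝ) :
    ∫⁻ x in A, kern α (x - y) ≤ ENNReal.ofReal (1 / α + 1 / (1 - α)) * volume A ^ α := by
  have hc : 0 < 1 / α + 1 / (1 - α) := by
    have : 0 < 1 - α := by linarith
    positivity
  rcases eq_or_ne (volume A) 0 with h | hA0
  · rw [setLIntegral_measure_zero _ _ h]; exact zero_le
  rcases eq_or_ne (volume A) ⊤ with h | hA1
  · rw [h, ENNReal.top_rpow_of_pos h0, ENNReal.mul_top (by simpa using hc)]; exact le_top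
  -- split the widths at `u = |A|`, where the two bounds of `lintegral_gk_set` coincide
  set a := (volume A).toReal with ha
  have ha0 : 0 < a := ENNReal.toReal_pos hA0 hA1
  have hAa : volume A = ENNReal.ofReal a := (ENNReal.ofReal_toReal hA1).symm
  have hmeas : Measurable (fun z : ℝ × ℝ =>
      ENNReal.ofReal (z.2 ^ (α - 1) * gk z.2 (z.1 - y))) :=
    (measurable_kern_integrand α).comp
      (f := fun z : ℝ × ℝ => (z.1 - y, z.2)) (by fun_prop)
  have hswap : ∫⁻ x in A, kern α (x - y) = ∫⁻ u in Set.Ioi (0 : ℝ),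
      ENNReal.ofReal (u ^ (α - 1)) * ∫⁻ x in A, ENNReal.ofReal (gk u (x - y)) := by
    unfold kern
    rw [lintegral_lintegral_swap hmeas.aemeasurable]
    refine setLIntegral_congr_fun measurableSet_Ioi fun u hu => ?_
    rw [← lintegral_const_mul']
    · refine lintegral_congr fun x => ?_
      rw [ENNReal.ofReal_mul (Real.rpow_nonneg (le_of_lt hu) _)]
    · exact ENNReal.ofReal_ne_top
  rw [hswap, ← Set.Ioc_union_Ioi_eq_Ioi ha0.le]
  refine (lintegral_union_le _ _ _).trans ?_
  have hA1 : ∫⁻ u in Set.Ioc 0 a, ENNReal.ofReal (u ^ (α - 1)) *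
      ∫⁻ x in A, ENNReal.ofReal (gk u (x - y)) ≤ ENNReal.ofReal (a ^ α / α) := by
    rw [← lintegral_rpow_Ioc ha0 h0]
    refine setLIntegral_mono' measurableSet_Ioc fun u hu => ?_
    calc _ ≤ ENNReal.ofReal (u ^ (α - 1)) * 1 := by
          gcongr; exact (lintegral_gk_set hu.1 y A).trans (min_le_left _ _)
      _ = _ := mul_one _
  have hA2 : ∫⁻ u in Set.Ioi a, ENNReal.ofReal (u ^ (α - 1)) *
      ∫⁻ x in A, ENNReal.ofReal (gk u (x - y)) ≤ ENNReal.ofReal (a ^ α / (1 - α)) := by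
    have e : a ^ α / (1 - α) = a * (a ^ (α - 1) / (-(α - 1))) := by
      rw [neg_sub, Real.rpow_sub_one ha0.ne']; field_simp
    rw [e, ENNReal.ofReal_mul ha0.le, ← lintegral_rpow_Ioi ha0 (by linarith),
      ← lintegral_const_mul' _ _ ENNReal.ofReal_ne_top]
    refine setLIntegral_mono' measurableSet_Ioi fun u hu => ?_
    have hu0 : 0 < u := ha0.trans hu
    calc _ ≤ ENNReal.ofReal (u ^ (α - 1)) * (volume A * ENNReal.ofReal u⁻¹) := by
          gcongr; exact (lintegral_gk_set hu0 y A).trans (min_le_right _ _)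
      _ = ENNReal.ofReal (a * u ^ (α - 1 - 1)) := by
          rw [hAa, ← ENNReal.ofReal_mul ha0.le,
            ← ENNReal.ofReal_mul (Real.rpow_nonneg hu0.le _), Real.rpow_sub_one hu0.ne' (α - 1)]
          congr 1; field_simp
      _ = _ := ENNReal.ofReal_mul ha0.le
  refine (add_le_add hA1 hA2).trans ?_
  have h1' : 0 < 1 - α := by linarith
  rw [hAa, ENNReal.ofReal_rpow_of_pos ha0, ← ENNReal.ofReal_mul hc.le,
    ← ENNReal.ofReal_add (by positivity) (by positivity)]
  apply le_of_eq; congr 1; field_simp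

/-! ### Layer-cake representations -/

/-- The layer-cake representation of a nonnegative extended real. -/
lemma layer_cake (x : ℝ≥0∞) :
    x = ∫⁻ a in Set.Ioi (0 : ℝ), if ENNReal.ofReal a < x then 1 else 0 := by
  have h : ∀ a : ℝ, (if ENNReal.ofReal a < x then (1 : ℝ≥0∞) else 0) =
      Set.indicator {a : ℝ | ENNReal.ofReal a < x} 1 a := by
    intro a; simp [Set.indicator]
  have hm : MeasurableSet {a : ℝ | ENNReal.ofReal a < x} :=
    measurableSet_lt (by fun_prop) measurable_const
  simp_rw [h]
  rw [lintegral_indicator_one hm, Measure.restrict_apply hm]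
  rcases eq_or_ne x ⊤ with rfl | hx
  · simp
  · have : {a : ℝ | ENNReal.ofReal a < x} ∩ Set.Ioi 0 = Set.Ioo 0 x.toReal := by
      ext a
      simp only [Set.mem_inter_iff, Set.mem_ofPred_eq, Set.mem_Ioi, Set.mem_Ioo]
      constructor
      · rintro ⟨h1, h2⟩; exact ⟨h2, (ENNReal.ofReal_lt_iff_lt_toReal h2.le hx).1 h1⟩
      · rintro ⟨h1, h2⟩; exact ⟨(ENNReal.ofReal_lt_iff_lt_toReal h1.le hx).2 h2, h1⟩
    rw [this, Real.volume_Ioo, sub_zero, ENNReal.ofReal_toReal hx]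

/-- The layer-cake bound for the `p`-th power, with the factor `p ≥ 1` dropped. -/
lemma layer_cake_rpow {p : ℝ} (hp : 1 ≤ p) (x : ℝ≥0∞) :
    ∫⁻ a in Set.Ioi (0 : ℝ), ENNReal.ofReal (a ^ (p - 1)) *
      (if ENNReal.ofReal a < x then 1 else 0) ≤ x ^ p := by
  have hp0 : 0 < p := by linarith
  rcases eq_or_ne x ⊤ with rfl | hx
  · rw [ENNReal.top_rpow_of_pos hp0]; exact le_top
  rcases eq_or_ne x 0 with rfl | hx0
  · simp
  have hx' : 0 < x.toReal := ENNReal.toReal_pos hx0 hx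
  calc _ ≤ ∫⁻ a in Set.Ioi (0 : ℝ), (Set.Ioc 0 x.toReal).indicator
          (fun a => ENNReal.ofReal (a ^ (p - 1))) a := by
        refine setLIntegral_mono' measurableSet_Ioi fun a ha => ?_
        split_ifs with h
        · rw [Set.indicator_of_mem, mul_one]
          exact ⟨ha, ((ENNReal.ofReal_lt_iff_lt_toReal (le_of_lt ha) hx).1 h).le⟩
        · simp
    _ ≤ ∫⁻ a in Set.Ioc 0 x.toReal, ENNReal.ofReal (a ^ (p - 1)) := by
        refine (setLIntegral_le_lintegral _ _).trans ?_
        rw [lintegral_indicator measurableSet_Ioc]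
    _ = ENNReal.ofReal (x.toReal ^ p / p) := lintegral_rpow_Ioc hx' hp0
    _ ≤ ENNReal.ofReal (x.toReal ^ p) := by
        apply ENNReal.ofReal_le_ofReal
        exact div_le_self (by positivity) hp
    _ = x ^ p := by
        rw [← ENNReal.ofReal_rpow_of_pos hx', ENNReal.ofReal_toReal hx]

/-! ### The Hardy–Littlewood–Sobolev inequality in one variable -/

/-- The one-dimensional bilinear form with kernel `kern α (x - y)`. -/
noncomputable def form (α : ℝ) (f h : ℝ → ℝ≥0∞) : ℝ≥0∞ :=
  ∫⁻ x, ∫⁻ y, f x * (kern α (x - y) * h y)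

lemma measurable_kern_sub (α : ℝ) : Measurable (fun z : ℝ × ℝ => kern α (z.1 - z.2)) :=
  (measurable_kern α).comp (measurable_fst.sub measurable_snd)

/-- One half of the layer-cake integral, on which `b ≤ a^(p/r)`. Hölder's inequality in `b`
produces exactly the power `a^(p-1)`, by the scaling relation `hrel`. -/
lemma half_bound {α p r : ℝ} (h0 : 0 < α) (h1 : α < 1) (hrα : r * α < 1)
    (hrel : p / r * (1 - r * α) = p - 1) {v w : ℝ → ℝ≥0∞} (hw : Measurable w)
    (hv1 : ∫⁻ a in Set.Ioi (0 : ℝ), ENNReal.ofReal (a ^ (p - 1)) * v a ≤ 1)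
    (hw1 : ∫⁻ b in Set.Ioi (0 : ℝ), ENNReal.ofReal (b ^ (r - 1)) * w b ≤ 1) :
    ∫⁻ a in Set.Ioi (0 : ℝ), v a * ∫⁻ b in Set.Ioc 0 (a ^ (p / r)), w b ^ α ≤
      ENNReal.ofReal (((1 - r * α) / (1 - α))⁻¹ ^ (1 - α)) := by
  have h1' : 0 < 1 - α := by linarith
  have hr' : 0 < 1 - r * α := by linarith
  -- `γ` makes the weights `b^((r-1)α)` and `b^((γ-1)(1-α))` in Hölder's inequality cancel
  set γ := (1 - r * α) / (1 - α) with hγ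
  have hγ0 : 0 < γ := by positivity
  have hγα : (γ - 1) * (1 - α) = -((r - 1) * α) := by
    rw [hγ]; field_simp; ring
  have inner : ∀ a ∈ Set.Ioi (0 : ℝ), ∫⁻ b in Set.Ioc 0 (a ^ (p / r)), w b ^ α ≤
      ENNReal.ofReal (γ⁻¹ ^ (1 - α)) * ENNReal.ofReal (a ^ (p - 1)) := by
    intro a ha
    have ha0 : 0 < a := ha
    have hA : 0 < a ^ (p / r) := Real.rpow_pos_of_pos ha0 _
    calc ∫⁻ b in Set.Ioc 0 (a ^ (p / r)), w b ^ α
        = ∫⁻ b in Set.Ioc 0 (a ^ (p / r)), (ENNReal.ofReal (b ^ (r - 1)) * w b) ^ α *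
            ENNReal.ofReal (b ^ (γ - 1)) ^ (1 - α) := by
          refine setLIntegral_congr_fun measurableSet_Ioc fun b hb => ?_
          have hb0 : 0 < b := hb.1
          rw [ENNReal.mul_rpow_of_nonneg _ _ h0.le,
            ENNReal.ofReal_rpow_of_pos (Real.rpow_pos_of_pos hb0 _),
            ENNReal.ofReal_rpow_of_pos (Real.rpow_pos_of_pos hb0 _),
            mul_right_comm, ← ENNReal.ofReal_mul (by positivity), ← Real.rpow_mul hb0.le,
            ← Real.rpow_mul hb0.le, ← Real.rpow_add hb0, hγα, add_neg_cancel, Real.rpow_zero,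
            ENNReal.ofReal_one, one_mul]
      _ ≤ (∫⁻ b in Set.Ioc 0 (a ^ (p / r)), ENNReal.ofReal (b ^ (r - 1)) * w b) ^ α *
            (∫⁻ b in Set.Ioc 0 (a ^ (p / r)), ENNReal.ofReal (b ^ (γ - 1))) ^ (1 - α) := by
          refine ENNReal.lintegral_mul_norm_pow_le ?_ ?_ h0.le h1'.le (by ring)
          · exact (Measurable.mul (by fun_prop) hw).aemeasurable
          · exact Measurable.aemeasurable (by fun_prop)
      _ ≤ 1 ^ α * ENNReal.ofReal ((a ^ (p / r)) ^ γ / γ) ^ (1 - α) := by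
          rw [lintegral_rpow_Ioc hA hγ0]
          gcongr
          exact (lintegral_mono_set Set.Ioc_subset_Ioi_self).trans hw1
      _ = _ := by
          rw [ENNReal.one_rpow, one_mul, ENNReal.ofReal_rpow_of_pos (by positivity),
            ← ENNReal.ofReal_mul (by positivity), div_eq_inv_mul,
            Real.mul_rpow (by positivity) (by positivity), ← Real.rpow_mul ha0.le,
            ← Real.rpow_mul ha0.le, ← hrel, hγ]
          congr 3
          field_simp
  calc _ ≤ ∫⁻ a in Set.Ioi (0 : ℝ), ENNReal.ofReal (γ⁻¹ ^ (1 - α)) *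
        (ENNReal.ofReal (a ^ (p - 1)) * v a) := by
        refine setLIntegral_mono' measurableSet_Ioi fun a ha => ?_
        rw [← mul_assoc, mul_comm (v a)]
        gcongr
        exact inner a ha
    _ = ENNReal.ofReal (γ⁻¹ ^ (1 - α)) * ∫⁻ a in Set.Ioi (0 : ℝ),
        ENNReal.ofReal (a ^ (p - 1)) * v a := lintegral_const_mul' _ _ ENNReal.ofReal_ne_top
    _ ≤ _ := mul_le_of_le_one_right' hv1

/-- The layer-cake bound for `L^p` norms in terms of the distribution function. -/
lemma lintegral_dist_le {p : ℝ} (hp : 1 ≤ p) {f : ℝ → ℝ≥0∞} (hf : Measurable f) :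
    ∫⁻ a in Set.Ioi (0 : ℝ), ENNReal.ofReal (a ^ (p - 1)) *
      volume {x | ENNReal.ofReal a < f x} ≤ ∫⁻ x, f x ^ p := by
  have hset : MeasurableSet {z : ℝ × ℝ | ENNReal.ofReal z.2 < f z.1} :=
    measurableSet_lt (by fun_prop) (by fun_prop)
  have hm : Measurable (Function.uncurry fun (x a : ℝ) => ENNReal.ofReal (a ^ (p - 1)) *
      (if ENNReal.ofReal a < f x then (1 : ℝ≥0∞) else 0)) :=
    Measurable.mul (by fun_prop) (Measurable.ite hset measurable_const measurable_const)
  calc _ = ∫⁻ a in Set.Ioi (0 : ℝ), ∫⁻ x, ENNReal.ofReal (a ^ (p - 1)) *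
        (if ENNReal.ofReal a < f x then 1 else 0) := by
        refine lintegral_congr fun a => ?_
        rw [lintegral_const_mul' _ _ ENNReal.ofReal_ne_top]
        congr 1
        rw [← lintegral_indicator_one (measurableSet_lt measurable_const hf)]
        refine lintegral_congr fun x => ?_
        simp [Set.indicator]
    _ = ∫⁻ x, ∫⁻ a in Set.Ioi (0 : ℝ), ENNReal.ofReal (a ^ (p - 1)) *
        (if ENNReal.ofReal a < f x then 1 else 0) :=
        (lintegral_lintegral_swap hm.aemeasurable).symm
    _ ≤ _ := lintegral_mono fun x => layer_cake_rpow hp (f x)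

/-- The bilinear form on indicator functions is at most a multiple of `|A| |B|^α`. By symmetry it
is also at most a multiple of `|A|^α |B|`. -/
lemma form_set_le {α : ℝ} (h0 : 0 < α) (h1 : α < 1) {A B : Set ℝ} (hA : MeasurableSet A)
    (hB : MeasurableSet B) :
    form α (A.indicator 1) (B.indicator 1) ≤
      ENNReal.ofReal (1 / α + 1 / (1 - α)) * (volume A * volume B ^ α) := by
  have : ∀ x, ∫⁻ y, (A.indicator 1 x : ℝ≥0∞) * (kern α (x - y) * B.indicator 1 y) ≤
      A.indicator 1 x * (ENNReal.ofReal (1 / α + 1 / (1 - α)) * volume B ^ α) := by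
    intro x
    rw [lintegral_const_mul']
    · gcongr
      calc _ = ∫⁻ y, B.indicator (fun y => kern α (y - x)) y := by
            refine lintegral_congr fun y => ?_
            rw [← kern_neg, neg_sub]
            by_cases hy : y ∈ B <;> simp [hy]
        _ = ∫⁻ y in B, kern α (y - x) := lintegral_indicator hB _
        _ ≤ _ := lintegral_kern_set h0 h1 x B
    · by_cases hx : x ∈ A <;> simp [hx]
  refine (lintegral_mono this).trans ?_
  rw [lintegral_mul_const _ (measurable_one.indicator hA), lintegral_indicator_one hA]
  apply le_of_eq; ring

lemma form_comm (α : ℝ) {f h : ℝ → ℝ≥0∞} (hf : Measurable f) (hh : Measurable h) :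
    form α f h = form α h f := by
  have hk := measurable_kern_sub α
  unfold form
  rw [lintegral_lintegral_swap]
  · refine lintegral_congr fun y => lintegral_congr fun x => ?_
    rw [← kern_neg, neg_sub]; ring
  · apply Measurable.aemeasurable
    exact Measurable.mul (by fun_prop) (Measurable.mul hk (by fun_prop))

/-- Double layer-cake decomposition of the bilinear form. -/
lemma form_layer (α : ℝ) {f h : ℝ → ℝ≥0∞} (hf : Measurable f) (hh : Measurable h) :
    form α f h = ∫⁻ a in Set.Ioi (0 : ℝ), ∫⁻ b in Set.Ioi (0 : ℝ),
      form α ({x | ENNReal.ofReal a < f x}.indicator 1)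
        ({y | ENNReal.ofReal b < h y}.indicator 1) := by
  -- as an integral against a product measure with density, the form is amenable to Tonelli
  set M : Measure (ℝ × ℝ) := (volume.prod volume).withDensity (fun z => kern α (z.1 - z.2))
  have hM : ∀ F H : ℝ → ℝ≥0∞, Measurable F → Measurable H →
      form α F H = ∫⁻ z, F z.1 * H z.2 ∂M := by
    intro F H hF hH
    have hk := measurable_kern_sub α
    rw [lintegral_withDensity_eq_lintegral_mul _ hk (by fun_prop), lintegral_prod]
    · refine lintegral_congr fun x => lintegral_congr fun y => ?_
      simp only [Pi.mul_apply]; ring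
    · exact (hk.mul (by fun_prop)).aemeasurable
  have hind : ∀ (g : ℝ → ℝ≥0∞), Measurable g → ∀ a : ℝ,
      Measurable ({x | ENNReal.ofReal a < g x}.indicator (1 : ℝ → ℝ≥0∞)) :=
    fun g hg a => measurable_one.indicator (measurableSet_lt measurable_const hg)
  have hind2 : ∀ (g : ℝ → ℝ≥0∞), Measurable g → Measurable (fun z : ℝ × ℝ =>
      ({x | ENNReal.ofReal z.1 < g x}.indicator (1 : ℝ → ℝ≥0∞) z.2)) := by
    intro g hg
    have : MeasurableSet {z : ℝ × ℝ | ENNReal.ofReal z.1 < g z.2} :=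
      measurableSet_lt (by fun_prop) (by fun_prop)
    exact (measurable_one (α := ℝ≥0∞)).indicator this
  have hrep : ∀ (g : ℝ → ℝ≥0∞) (x : ℝ), g x = ∫⁻ a in Set.Ioi (0 : ℝ),
      {x | ENNReal.ofReal a < g x}.indicator (1 : ℝ → ℝ≥0∞) x := by
    intro g x
    conv_lhs => rw [layer_cake (g x)]
    refine lintegral_congr fun a => ?_
    simp [Set.indicator]
  set ν : Measure ℝ := volume.restrict (Set.Ioi (0 : ℝ))
  have hf2 := hind2 f hf
  have hh2 := hind2 h hh
  calc form α f h = ∫⁻ z, f z.1 * h z.2 ∂M := hM f h hf hh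
    _ = ∫⁻ z, ∫⁻ a, ∫⁻ b, {x | ENNReal.ofReal a < f x}.indicator 1 z.1 *
          {y | ENNReal.ofReal b < h y}.indicator 1 z.2 ∂ν ∂ν ∂M := by
        refine lintegral_congr fun z => ?_
        conv_lhs => rw [hrep f z.1, hrep h z.2]
        rw [← lintegral_mul_const]
        · refine lintegral_congr fun a => ?_
          rw [← lintegral_const_mul]
          exact hh2.comp (f := fun b : ℝ => (b, z.2)) (by fun_prop)
        · exact hf2.comp (f := fun b : ℝ => (b, z.1)) (by fun_prop)
    _ = ∫⁻ a, ∫⁻ z, ∫⁻ b, {x | ENNReal.ofReal a < f x}.indicator 1 z.1 *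
          {y | ENNReal.ofReal b < h y}.indicator 1 z.2 ∂ν ∂M ∂ν := by
        rw [lintegral_lintegral_swap]
        apply Measurable.aemeasurable
        refine Measurable.lintegral_prod_right' (f := fun q : ((ℝ × ℝ) × ℝ) × ℝ =>
          {x | ENNReal.ofReal q.1.2 < f x}.indicator (1 : ℝ → ℝ≥0∞) q.1.1.1 *
          {y | ENNReal.ofReal q.2 < h y}.indicator (1 : ℝ → ℝ≥0∞) q.1.1.2) ?_
        exact (hf2.comp (f := fun q : ((ℝ × ℝ) × ℝ) × ℝ => (q.1.2, q.1.1.1)) (by fun_prop)).mul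
          (hh2.comp (f := fun q : ((ℝ × ℝ) × ℝ) × ℝ => (q.2, q.1.1.2)) (by fun_prop))
    _ = ∫⁻ a, ∫⁻ b, ∫⁻ z, {x | ENNReal.ofReal a < f x}.indicator 1 z.1 *
          {y | ENNReal.ofReal b < h y}.indicator 1 z.2 ∂M ∂ν ∂ν := by
        refine lintegral_congr fun a => ?_
        rw [lintegral_lintegral_swap]
        apply Measurable.aemeasurable
        exact (hf2.comp (f := fun q : (ℝ × ℝ) × ℝ => (a, q.1.1)) (by fun_prop)).mul
          (hh2.comp (f := fun q : (ℝ × ℝ) × ℝ => (q.2, q.1.2)) (by fun_prop))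
    _ = _ := by
        refine lintegral_congr fun a => lintegral_congr fun b => ?_
        rw [hM _ _ (hind f hf a) (hind h hh b)]

/-- The normalised Hardy–Littlewood–Sobolev inequality in dimension one. In the double layer-cake
integral over levels `a` of `f` and `b` of `h`, the form on superlevel sets is bounded by
`v a * w b ^ α` where `b ≤ a^(p/r)` and by `w b * v a ^ α` elsewhere, with `v`, `w` the
distribution functions. -/
lemma form_le_of_norm_le_one {α p r : ℝ} (h0 : 0 < α) (h1 : α < 1) (hp : 1 < p) (hr : 1 < r)
    (hpr : 1 / p + 1 / r = 1 + α) :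
    ∃ C : ℝ, 0 < C ∧ ∀ f h : ℝ → ℝ≥0∞, Measurable f → Measurable h →
      ∫⁻ x, f x ^ p ≤ 1 → ∫⁻ x, h x ^ r ≤ 1 → form α f h ≤ ENNReal.ofReal C := by
  have hp0 : 0 < p := by linarith
  have hr0 : 0 < r := by linarith
  have h1' : 0 < 1 - α := by linarith
  have hpr' : r + p = p * r * (1 + α) := by
    rw [← hpr]; field_simp
  have hrα : r * α < 1 := by nlinarith
  have hpα : p * α < 1 := by nlinarith
  have hrel : p / r * (1 - r * α) = p - 1 := by
    field_simp; linarith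
  have hrel' : r / p * (1 - p * α) = r - 1 := by
    field_simp; linarith
  set c0 := 1 / α + 1 / (1 - α)
  set c1 := ((1 - r * α) / (1 - α))⁻¹ ^ (1 - α)
  set c2 := ((1 - p * α) / (1 - α))⁻¹ ^ (1 - α)
  have hr' : 0 < 1 - r * α := by linarith
  have hp' : 0 < 1 - p * α := by linarith
  have hc0 : 0 < c0 := by positivity
  have hc1 : 0 < c1 := by positivity
  have hc2 : 0 < c2 := by positivity
  refine ⟨c0 * (c1 + c2), by positivity, fun f h hf hh hF hH => ?_⟩
  have hdist : ∀ g : ℝ → ℝ≥0∞, Measurable fun a : ℝ => volume {x | ENNReal.ofReal a < g x} := by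
    intro g
    refine Antitone.measurable fun a b hab => measure_mono fun x hx => ?_
    exact (ENNReal.ofReal_le_ofReal hab).trans_lt hx
  set v : ℝ → ℝ≥0∞ := fun a => volume {x | ENNReal.ofReal a < f x} with hv
  set w : ℝ → ℝ≥0∞ := fun b => volume {x | ENNReal.ofReal b < h x} with hw
  have hvm : Measurable v := hdist f
  have hwm : Measurable w := hdist h
  have hv1 := (lintegral_dist_le hp.le hf).trans hF
  have hw1 := (lintegral_dist_le hr.le hh).trans hH
  have half1 := half_bound h0 h1 hrα hrel hwm hv1 hw1
  have half2 := half_bound h0 h1 hpα hrel' hvm hw1 hv1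
  have hset : ∀ e : ℝ, MeasurableSet {q : ℝ × ℝ | q.2 ∈ Set.Ioc 0 (q.1 ^ e)} := fun e =>
    (measurableSet_lt measurable_const measurable_snd).inter
      (measurableSet_le measurable_snd (measurable_fst.pow_const e))
  -- `G1` and `G2` carry the two regions `b ≤ a^(p/r)` and `a ≤ b^(r/p)`, which cover the quadrant
  set G1 : ℝ → ℝ → ℝ≥0∞ := fun a b => v a * (Set.Ioc 0 (a ^ (p / r))).indicator (fun b => w b ^ α) b
  set G2 : ℝ → ℝ → ℝ≥0∞ := fun b a => w b * (Set.Ioc 0 (b ^ (r / p))).indicator (fun a => v a ^ α) a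
  have hG1 : Measurable (Function.uncurry G1) :=
    (hvm.comp measurable_fst).mul
      (Measurable.indicator (f := fun q : ℝ × ℝ => w q.2 ^ α) (by fun_prop) (hset _))
  have hG2 : Measurable (Function.uncurry G2) :=
    (hwm.comp measurable_fst).mul
      (Measurable.indicator (f := fun q : ℝ × ℝ => v q.2 ^ α) (by fun_prop) (hset _))
  have hptw : ∀ a ∈ Set.Ioi (0 : ℝ), ∀ b ∈ Set.Ioi (0 : ℝ),
      form α ({x | ENNReal.ofReal a < f x}.indicator 1)
        ({y | ENNReal.ofReal b < h y}.indicator 1) ≤ ENNReal.ofReal c0 * (G1 a b + G2 b a) := by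
    intro a ha b hb
    have ha0 : 0 < a := ha
    have hb0 : 0 < b := hb
    have mA : MeasurableSet {x | ENNReal.ofReal a < f x} := measurableSet_lt measurable_const hf
    have mB : MeasurableSet {x | ENNReal.ofReal b < h x} := measurableSet_lt measurable_const hh
    rcases le_or_gt b (a ^ (p / r)) with hab | hab
    · refine (form_set_le h0 h1 mA mB).trans ?_
      gcongr
      have : G1 a b = v a * w b ^ α := by
        simp only [G1]; rw [Set.indicator_of_mem (show b ∈ Set.Ioc 0 (a ^ (p / r)) from ⟨hb0, hab⟩)]
      rw [this]; exact le_self_add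
    · rw [form_comm α (measurable_one.indicator mA) (measurable_one.indicator mB)]
      refine (form_set_le h0 h1 mB mA).trans ?_
      gcongr
      have hba : a ≤ b ^ (r / p) := by
        calc a = (a ^ (p / r)) ^ (r / p) := by
              rw [← Real.rpow_mul ha0.le]
              have : p / r * (r / p) = 1 := by field_simp
              rw [this, Real.rpow_one]
          _ ≤ _ := Real.rpow_le_rpow (by positivity) hab.le (by positivity)
      have : G2 b a = w b * v a ^ α := by
        simp only [G2]; rw [Set.indicator_of_mem (show a ∈ Set.Ioc 0 (b ^ (r / p)) from ⟨ha0, hba⟩)]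
      rw [this]; exact le_add_self
  have hI1 : ∫⁻ a in Set.Ioi (0 : ℝ), ∫⁻ b in Set.Ioi (0 : ℝ), G1 a b ≤ ENNReal.ofReal c1 := by
    refine le_trans (lintegral_mono fun a => ?_) half1
    refine (setLIntegral_le_lintegral _ _).trans ?_
    rw [lintegral_const_mul _ ((Measurable.pow_const hwm α).indicator measurableSet_Ioc),
      lintegral_indicator measurableSet_Ioc]
  have hI2 : ∫⁻ a in Set.Ioi (0 : ℝ), ∫⁻ b in Set.Ioi (0 : ℝ), G2 b a ≤ ENNReal.ofReal c2 := by
    rw [lintegral_lintegral_swap (f := fun a b => G2 b a)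
      (hG2.comp measurable_swap).aemeasurable]
    refine le_trans (lintegral_mono fun a => ?_) half2
    refine (setLIntegral_le_lintegral _ _).trans ?_
    rw [lintegral_const_mul _ ((Measurable.pow_const hvm α).indicator measurableSet_Ioc),
      lintegral_indicator measurableSet_Ioc]
  rw [form_layer α hf hh]
  calc _ ≤ ∫⁻ a in Set.Ioi (0 : ℝ), ∫⁻ b in Set.Ioi (0 : ℝ),
        ENNReal.ofReal c0 * (G1 a b + G2 b a) :=
        setLIntegral_mono' measurableSet_Ioi fun a ha =>
          setLIntegral_mono' measurableSet_Ioi fun b hb => hptw a ha b hb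
    _ = ENNReal.ofReal c0 * ((∫⁻ a in Set.Ioi (0 : ℝ), ∫⁻ b in Set.Ioi (0 : ℝ), G1 a b) +
        ∫⁻ a in Set.Ioi (0 : ℝ), ∫⁻ b in Set.Ioi (0 : ℝ), G2 b a) := by
        rw [← lintegral_add_left (f := fun a => ∫⁻ b in Set.Ioi (0 : ℝ), G1 a b)
          hG1.lintegral_prod_right',
          ← lintegral_const_mul' _ _ ENNReal.ofReal_ne_top]
        refine lintegral_congr fun a => ?_
        rw [lintegral_const_mul' _ _ ENNReal.ofReal_ne_top, lintegral_add_left]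
        exact hG1.comp (f := fun b : ℝ => (a, b)) (by fun_prop)
    _ ≤ ENNReal.ofReal c0 * (ENNReal.ofReal c1 + ENNReal.ofReal c2) := by gcongr
    _ = _ := by
        rw [← ENNReal.ofReal_add hc1.le hc2.le, ← ENNReal.ofReal_mul hc0.le]

lemma form_smul (α : ℝ) (a b : ℝ≥0∞) {f h : ℝ → ℝ≥0∞} (hf : Measurable f) (hh : Measurable h) :
    form α (fun x => a * f x) (fun x => b * h x) = a * b * form α f h := by
  have hk := measurable_kern_sub α
  unfold form
  have hm : Measurable fun q : ℝ × ℝ => f q.1 * (kern α (q.1 - q.2) * h q.2) :=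
    Measurable.mul (by fun_prop) (Measurable.mul hk (by fun_prop))
  rw [← lintegral_const_mul _ hm.lintegral_prod_right']
  refine lintegral_congr fun x => ?_
  have hm' : Measurable fun y => f x * (kern α (x - y) * h y) :=
    hm.comp (f := fun y : ℝ => (x, y)) (by fun_prop)
  rw [← lintegral_const_mul _ hm']
  refine lintegral_congr fun y => ?_
  ring

/-- The Hardy–Littlewood–Sobolev inequality in dimension one, as a bound on a bilinear form. -/
lemma form_le {α p r : ℝ} (h0 : 0 < α) (h1 : α < 1) (hp : 1 < p) (hr : 1 < r)
    (hpr : 1 / p + 1 / r = 1 + α) :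
    ∃ C : ℝ, 0 < C ∧ ∀ f h : ℝ → ℝ≥0∞, Measurable f → Measurable h →
      form α f h ≤ ENNReal.ofReal C * ((∫⁻ x, f x ^ p) ^ (1 / p) * (∫⁻ x, h x ^ r) ^ (1 / r)) := by
  obtain ⟨C, hC, H⟩ := form_le_of_norm_le_one h0 h1 hp hr hpr
  have hp0 : 0 < p := by linarith
  have hr0 : 0 < r := by linarith
  refine ⟨C, hC, fun f h hf hh => ?_⟩
  have hz : ∀ (g : ℝ → ℝ≥0∞) (e : ℝ), 0 < e → Measurable g → ∫⁻ x, g x ^ e = 0 →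
      ∀ᵐ x, g x = 0 := by
    intro g e he hg h
    rw [lintegral_eq_zero_iff (hg.pow_const e)] at h
    filter_upwards [h] with x hx
    simpa [he, he.le, not_lt.2 he.le] using hx
  set F := (∫⁻ x, f x ^ p) ^ (1 / p) with hF
  set G := (∫⁻ x, h x ^ r) ^ (1 / r) with hG
  rcases eq_or_ne F 0 with hF0 | hF0
  · have : ∫⁻ x, f x ^ p = 0 := by
      rwa [hF, ENNReal.rpow_eq_zero_iff_of_pos (by positivity)] at hF0
    have hae := hz f p hp0 hf this
    have : form α f h = 0 := by
      unfold form
      rw [lintegral_congr_ae (g := fun _ => 0), lintegral_zero]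
      filter_upwards [hae] with x hx
      simp [hx]
    rw [this]; exact zero_le
  rcases eq_or_ne G 0 with hG0 | hG0
  · have : ∫⁻ x, h x ^ r = 0 := by
      rwa [hG, ENNReal.rpow_eq_zero_iff_of_pos (by positivity)] at hG0
    have hae := hz h r hr0 hh this
    have : form α f h = 0 := by
      rw [form_comm α hf hh]
      unfold form
      rw [lintegral_congr_ae (g := fun _ => 0), lintegral_zero]
      filter_upwards [hae] with x hx
      simp [hx]
    rw [this]; exact zero_le
  have hCt : ENNReal.ofReal C ≠ 0 := by simpa using hC
  rcases eq_or_ne F ⊤ with hF1 | hF1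
  · rw [hF1, ENNReal.top_mul hG0, ENNReal.mul_top hCt]; exact le_top
  rcases eq_or_ne G ⊤ with hG1 | hG1
  · rw [hG1, ENNReal.mul_top hF0, ENNReal.mul_top hCt]; exact le_top
  have hnorm : ∀ (g : ℝ → ℝ≥0∞) (e : ℝ), 0 < e → (∫⁻ x, g x ^ e) ^ (1 / e) ≠ 0 →
      (∫⁻ x, g x ^ e) ^ (1 / e) ≠ ⊤ →
      ∫⁻ x, (((∫⁻ x, g x ^ e) ^ (1 / e))⁻¹ * g x) ^ e ≤ 1 := by
    intro g e he hne0 hnet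
    set N := (∫⁻ x, g x ^ e) ^ (1 / e) with hN
    have hNe : N ^ e = ∫⁻ x, g x ^ e := by
      rw [hN, ← ENNReal.rpow_mul, one_div_mul_cancel he.ne', ENNReal.rpow_one]
    simp_rw [ENNReal.mul_rpow_of_nonneg _ _ he.le]
    rw [lintegral_const_mul', ← hNe, ← ENNReal.mul_rpow_of_nonneg _ _ he.le,
      ENNReal.inv_mul_cancel hne0 hnet, ENNReal.one_rpow]
    exact ENNReal.rpow_ne_top_of_nonneg he.le (ENNReal.inv_ne_top.2 hne0)
  have key := H (fun x => F⁻¹ * f x) (fun x => G⁻¹ * h x) (by fun_prop) (by fun_prop)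
    (hnorm f p hp0 hF0 hF1) (hnorm h r hr0 hG0 hG1)
  rw [form_smul α _ _ hf hh] at key
  calc form α f h = (F * F⁻¹) * (G * G⁻¹) * form α f h := by
        rw [ENNReal.mul_inv_cancel hF0 hF1, ENNReal.mul_inv_cancel hG0 hG1]; simp
    _ = F * G * (F⁻¹ * G⁻¹ * form α f h) := by ring
    _ ≤ F * G * ENNReal.ofReal C := by gcongr
    _ = _ := mul_comm _ _

/-! ### The product kernel on the plane -/

/-- The Hardy–Littlewood–Sobolev inequality for the product kernel on the plane. The
one-dimensional bound is applied in the second variables for fixed first variables, and then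
to the norms of the slices as functions of the first variables. -/
lemma form₂_le {α p r : ℝ} (h0 : 0 < α) (h1 : α < 1) (hp : 1 < p) (hr : 1 < r)
    (hpr : 1 / p + 1 / r = 1 + α) :
    ∃ C : ℝ, 0 < C ∧ ∀ F G : ℝ × ℝ → ℝ≥0∞, Measurable F → Measurable G →
      ∫⁻ z, F z * ∫⁻ w, kern α (z.1 - w.1) * kern α (z.2 - w.2) * G w ≤
        ENNReal.ofReal C * ((∫⁻ z, F z ^ p) ^ (1 / p) * (∫⁻ z, G z ^ r) ^ (1 / r)) := by
  obtain ⟨C, hC, H⟩ := form_le h0 h1 hp hr hpr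
  have hp0 : 0 < p := by linarith
  have hr0 : 0 < r := by linarith
  refine ⟨C * C, by positivity, fun F G hF hG => ?_⟩
  have hk := measurable_kern α
  set φ : ℝ → ℝ≥0∞ := fun x => (∫⁻ y, F (x, y) ^ p) ^ (1 / p) with hφ
  set ψ : ℝ → ℝ≥0∞ := fun x => (∫⁻ y, G (x, y) ^ r) ^ (1 / r) with hψ
  have hφm : Measurable φ :=
    Measurable.pow_const (Measurable.lintegral_prod_right' (hF.pow_const p)) _
  have hψm : Measurable ψ :=
    Measurable.pow_const (Measurable.lintegral_prod_right' (hG.pow_const r)) _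
  have hφp : ∫⁻ x, φ x ^ p = ∫⁻ z, F z ^ p := by
    rw [Measure.volume_eq_prod, lintegral_prod _ (hF.pow_const p).aemeasurable]
    refine lintegral_congr fun x => ?_
    simp only [hφ]
    rw [← ENNReal.rpow_mul, one_div_mul_cancel hp0.ne', ENNReal.rpow_one]
  have hψr : ∫⁻ x, ψ x ^ r = ∫⁻ z, G z ^ r := by
    rw [Measure.volume_eq_prod, lintegral_prod _ (hG.pow_const r).aemeasurable]
    refine lintegral_congr fun x => ?_
    simp only [hψ]
    rw [← ENNReal.rpow_mul, one_div_mul_cancel hr0.ne', ENNReal.rpow_one]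
  have hfull : Measurable fun q : (ℝ × ℝ) × (ℝ × ℝ) =>
      F q.1 * (kern α (q.1.1 - q.2.1) * kern α (q.1.2 - q.2.2) * G q.2) := by fun_prop
  calc _ = ∫⁻ z : ℝ × ℝ, ∫⁻ w : ℝ × ℝ,
        F z * (kern α (z.1 - w.1) * kern α (z.2 - w.2) * G w) := by
        refine lintegral_congr fun z => ?_
        rw [lintegral_const_mul]; fun_prop
    _ = ∫⁻ x, ∫⁻ y, ∫⁻ x', ∫⁻ y',
        F (x, y) * (kern α (x - x') * kern α (y - y') * G (x', y')) := by
        rw [Measure.volume_eq_prod, lintegral_prod _ hfull.lintegral_prod_right'.aemeasurable]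
        refine lintegral_congr fun x => lintegral_congr fun y => ?_
        rw [lintegral_prod]
        exact (hfull.comp (f := fun w => ((x, y), w)) (by fun_prop)).aemeasurable
    _ = ∫⁻ x, ∫⁻ x', ∫⁻ y, ∫⁻ y',
        F (x, y) * (kern α (x - x') * kern α (y - y') * G (x', y')) := by
        refine lintegral_congr fun x => ?_
        rw [lintegral_lintegral_swap]
        apply Measurable.aemeasurable
        refine Measurable.lintegral_prod_right' (f := fun q : (ℝ × ℝ) × ℝ =>
          F (x, q.1.1) * (kern α (x - q.1.2) * kern α (q.1.1 - q.2) * G (q.1.2, q.2))) ?_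
        fun_prop
    _ = ∫⁻ x, ∫⁻ x', kern α (x - x') * form α (fun y => F (x, y)) (fun y => G (x', y)) := by
        refine lintegral_congr fun x => lintegral_congr fun x' => ?_
        unfold form
        have hm : Measurable fun q : ℝ × ℝ =>
            F (x, q.1) * (kern α (q.1 - q.2) * G (x', q.2)) := by fun_prop
        rw [← lintegral_const_mul _ hm.lintegral_prod_right']
        refine lintegral_congr fun y => ?_
        rw [← lintegral_const_mul _ (by fun_prop)]
        refine lintegral_congr fun y' => ?_
        ring
    _ ≤ ∫⁻ x, ∫⁻ x', kern α (x - x') * (ENNReal.ofReal C * (φ x * ψ x')) := by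
        gcongr with x x'
        exact H _ _ (by fun_prop) (by fun_prop)
    _ = ENNReal.ofReal C * form α φ ψ := by
        unfold form
        rw [← lintegral_const_mul' _ _ ENNReal.ofReal_ne_top]
        refine lintegral_congr fun x => ?_
        rw [← lintegral_const_mul' _ _ ENNReal.ofReal_ne_top]
        refine lintegral_congr fun x' => ?_
        ring
    _ ≤ ENNReal.ofReal C * (ENNReal.ofReal C *
        ((∫⁻ x, φ x ^ p) ^ (1 / p) * (∫⁻ x, ψ x ^ r) ^ (1 / r))) := by
        gcongr
        exact H φ ψ hφm hψm
    _ = _ := by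
        rw [hφp, hψr, ← mul_assoc, ← ENNReal.ofReal_mul hC.le]

/-! ### The Fourier transform of a test function -/

lemma ft_eq (f : ℝ × ℝ → ℂ) (ξ : ℝ × ℝ) :
    ft f ξ = FourierTransform.fourier (f ∘ Complex.measurableEquivRealProd)
      (Complex.measurableEquivRealProd.symm ξ) := by
  rw [Real.fourier_eq']
  unfold ft
  rw [← Complex.volume_preserving_equiv_real_prod.integral_comp']
  refine integral_congr_ae (Eventually.of_forall fun v => ?_)
  simp [Complex.measurableEquivRealProd, mul_comm]

lemma ftInv_eq (f : ℝ × ℝ → ℂ) (ξ : ℝ × ℝ) :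
    ftInv f ξ = FourierTransformInv.fourierInv (f ∘ Complex.measurableEquivRealProd)
      (Complex.measurableEquivRealProd.symm ξ) := by
  rw [Real.fourierInv_eq']
  unfold ftInv
  rw [← Complex.volume_preserving_equiv_real_prod.integral_comp']
  refine integral_congr_ae (Eventually.of_forall fun v => ?_)
  simp [Complex.measurableEquivRealProd, mul_comm]

/-- Under the identification of `ℝ × ℝ` with the inner product space `ℂ`, the Fourier
transform of a test function is a Schwartz function. -/
lemma exists_schwartz {f : ℝ × ℝ → ℂ} (hf : ContDiff ℝ (⊤ : ℕ∞) f) (hc : HasCompactSupport f) :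
    ∃ φ : SchwartzMap ℂ ℂ, (ft f ∘ Complex.measurableEquivRealProd = φ) ∧ ftInv (ft f) = f := by
  have h1 : HasCompactSupport (f ∘ Complex.measurableEquivRealProd) :=
    hc.comp_homeomorph Complex.equivRealProdCLM.toHomeomorph
  have h2 : ContDiff ℝ (⊤ : ℕ∞) (f ∘ Complex.measurableEquivRealProd) :=
    hf.comp Complex.equivRealProdCLM.contDiff
  set ψ : SchwartzMap ℂ ℂ := h1.toSchwartzMap h2 with hψ
  have hψc : (ψ : ℂ → ℂ) = f ∘ Complex.measurableEquivRealProd := rfl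
  have e1 : ft f ∘ Complex.measurableEquivRealProd = (FourierTransform.fourier ψ : SchwartzMap ℂ ℂ) := by
    rw [SchwartzMap.fourier_coe, hψc]
    ext z
    simp only [Function.comp_apply]
    rw [ft_eq, MeasurableEquiv.symm_apply_apply]
  refine ⟨FourierTransform.fourier ψ, e1, ?_⟩
  ext ξ
  rw [ftInv_eq, e1, ← SchwartzMap.fourierInv_coe, FourierTransform.fourierInv_fourier_eq, hψc]
  simp

lemma ft_continuous {f : ℝ × ℝ → ℂ} (hf : ContDiff ℝ (⊤ : ℕ∞) f) (hc : HasCompactSupport f) :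
    Continuous (ft f) := by
  obtain ⟨φ, h, -⟩ := exists_schwartz hf hc
  have : ft f = φ ∘ Complex.equivRealProdCLM.symm := by
    rw [← h]; ext ξ
    simp only [Function.comp_apply]
    congr 1
  rw [this]
  exact φ.continuous.comp Complex.equivRealProdCLM.symm.continuous

lemma rpow_le_one_add {t e : ℝ} (ht : 0 ≤ t) (he0 : 0 ≤ e) (he1 : e ≤ 1) : t ^ e ≤ 1 + t := by
  rcases le_total t 1 with h | h
  · linarith [Real.rpow_le_one ht h he0]
  · have := Real.rpow_le_rpow_of_exponent_le h he1
    rw [Real.rpow_one] at this; linarith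

/-- The symbol has at most linear growth, so that its product with `ft f` is integrable. -/
lemma integrable_symbol {f : ℝ × ℝ → ℂ} (hf : ContDiff ℝ (⊤ : ℕ∞) f) (hc : HasCompactSupport f)
    {α : ℝ} (h0 : 0 ≤ α) (h1 : α ≤ 1 / 2) :
    Integrable (fun p : ℝ × ℝ => ((|p.1| ^ α * |p.2| ^ α : ℝ) : ℂ) * ft f p) := by
  obtain ⟨φ, h, -⟩ := exists_schwartz hf hc
  have hcont := ft_continuous hf hc
  rw [← Complex.volume_preserving_equiv_real_prod.integrable_comp_emb
    Complex.measurableEquivRealProd.measurableEmbedding]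
  have i0 := φ.integrable_pow_mul volume 0
  have i1 := φ.integrable_pow_mul volume 1
  refine (i0.add i1).mono' ?_ (Eventually.of_forall fun z => ?_)
  · apply Measurable.aestronglyMeasurable
    have := hcont.measurable
    have := Complex.measurableEquivRealProd.measurable
    fun_prop
  · have hz : ft f (Complex.measurableEquivRealProd z) = φ z := congrFun h z
    simp only [Function.comp_apply, Pi.add_apply, pow_zero, one_mul, pow_one, norm_mul, hz,
      Complex.norm_real, Real.norm_eq_abs]
    rw [← one_add_mul]
    gcongr
    rw [← abs_mul]
    change |(|z.re| ^ α * |z.im| ^ α : ℝ)| ≤ 1 + ‖z‖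
    rw [abs_of_nonneg (a := |z.re| ^ α * |z.im| ^ α) (by positivity)]
    calc _ ≤ ‖z‖ ^ α * ‖z‖ ^ α := by
          gcongr
          · exact Complex.abs_re_le_norm z
          · exact Complex.abs_im_le_norm z
      _ = ‖z‖ ^ (α + α) := (Real.rpow_add_of_nonneg (norm_nonneg _) h0 h0).symm
      _ ≤ _ := rpow_le_one_add (norm_nonneg _) (by linarith) (by linarith)

lemma integrable_ft {f : ℝ × ℝ → ℂ} (hf : ContDiff ℝ (⊤ : ℕ∞) f) (hc : HasCompactSupport f) :
    Integrable (ft f) := by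
  simpa using integrable_symbol hf hc (α := 0) le_rfl (by norm_num)

lemma norm_phase (a b c d : ℝ) :
    ‖Complex.exp (2 * Real.pi * (a * b + c * d) * Complex.I)‖ = 1 := by
  have : (2 * Real.pi * (a * b + c * d) * Complex.I : ℂ) =
      ((2 * Real.pi * (a * b + c * d) : ℝ) : ℂ) * Complex.I := by push_cast; ring
  rw [this, Complex.norm_exp_ofReal_mul_I]

lemma ftInv_continuous {F : ℝ × ℝ → ℂ} (hF : Integrable F) : Continuous (ftInv F) := by
  unfold ftInv
  refine continuous_of_dominated (bound := fun ξ => ‖F ξ‖) (fun x => ?_) (fun x => ?_) hF.norm ?_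
  · refine AEStronglyMeasurable.mul ?_ hF.1
    apply Continuous.aestronglyMeasurable; fun_prop
  · refine Eventually.of_forall fun ξ => ?_
    rw [norm_mul, norm_phase, one_mul]
  · refine Eventually.of_forall fun ξ => ?_
    fun_prop

/-! ### Gaussians on the Fourier side -/

/-- The Gaussian `gk u` has Fourier transform `exp (-π u² ξ²)`. -/
lemma integral_gk_mul_exp {u : ℝ} (hu : 0 < u) (x ξ : ℝ) :
    ∫ y, (gk u (x - y) : ℂ) * Complex.exp (2 * Real.pi * (y * ξ) * Complex.I) =
      Complex.exp (2 * Real.pi * (x * ξ) * Complex.I) *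
        (Real.exp (-(Real.pi * ξ ^ 2) * u ^ 2) : ℂ) := by
  rw [← integral_sub_left_eq_self _ volume x]
  have hb : 0 < ((Real.pi / u ^ 2 : ℝ) : ℂ).re := by
    rw [Complex.ofReal_re]; positivity
  have key := fourierIntegral_gaussian hb (-(2 * Real.pi * ξ : ℝ))
  have hu' : (u : ℂ) ≠ 0 := by exact_mod_cast hu.ne'
  have hpi : (Real.pi : ℂ) ≠ 0 := by exact_mod_cast Real.pi_ne_zero
  have hsq : ((Real.pi : ℂ) / ((Real.pi / u ^ 2 : ℝ) : ℂ)) ^ (1 / 2 : ℂ) = u := by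
    have : ((Real.pi : ℂ) / ((Real.pi / u ^ 2 : ℝ) : ℂ)) = ((u ^ 2 : ℝ) : ℂ) := by
      push_cast; field_simp
    rw [this, show (1 / 2 : ℂ) = ((1 / 2 : ℝ) : ℂ) by push_cast; rfl,
      ← Complex.ofReal_cpow (by positivity), ← Real.sqrt_eq_rpow, Real.sqrt_sq hu.le]
  rw [hsq] at key
  have e : ∀ t : ℝ, (gk u (x - (x - t)) : ℂ) *
      Complex.exp (2 * Real.pi * (((x - t : ℝ) : ℂ) * ξ) * Complex.I) =
      (Complex.exp (2 * Real.pi * (x * ξ) * Complex.I) * (u : ℂ)⁻¹) *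
      (Complex.exp (Complex.I * (-(2 * Real.pi * ξ : ℝ) : ℂ) * t) *
        Complex.exp (-((Real.pi / u ^ 2 : ℝ) : ℂ) * t ^ 2)) := by
    intro t
    have e1 : Complex.exp (2 * Real.pi * (((x - t : ℝ) : ℂ) * ξ) * Complex.I) =
        Complex.exp (2 * Real.pi * (x * ξ) * Complex.I) *
          Complex.exp (Complex.I * (-(2 * Real.pi * ξ : ℝ) : ℂ) * t) := by
      rw [← Complex.exp_add]; congr 1; push_cast; ring
    rw [e1, sub_sub_cancel]
    unfold gk
    push_cast
    ring
  simp_rw [e]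
  rw [integral_const_mul, key, mul_assoc, ← mul_assoc _ (u : ℂ), inv_mul_cancel₀ hu', one_mul]
  congr 1
  push_cast
  congr 1
  field_simp
  ring

lemma symbol_integral {α : ℝ} (h0 : 0 < α) {ξ : ℝ} (hξ : ξ ≠ 0) :
    ∫ u in Set.Ioi (0 : ℝ), u ^ (α - 1) * Real.exp (-(Real.pi * ξ ^ 2) * u ^ 2) =
      Real.pi ^ (-(α / 2)) * (1 / 2) * Real.Gamma (α / 2) * |ξ| ^ (-α) := by
  have hb : 0 < Real.pi * ξ ^ 2 := by positivity
  have := integral_rpow_mul_exp_neg_mul_rpow (p := 2) (q := α - 1) two_pos (by linarith) hb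
  simp only [Real.rpow_two, sub_add_cancel] at this
  rw [this, Real.mul_rpow Real.pi_pos.le (by positivity), ← sq_abs, ← Real.rpow_natCast |ξ|,
    ← Real.rpow_mul (abs_nonneg ξ)]
  have e1 : -α / 2 = -(α / 2) := by ring
  have e2 : ((2 : ℕ) : ℝ) * (-α / 2) = -α := by push_cast; ring
  rw [e2, e1]; ring

lemma symbol_integrable {α : ℝ} (h0 : 0 < α) {ξ : ℝ} (hξ : ξ ≠ 0) :
    IntegrableOn (fun u : ℝ => u ^ (α - 1) * Real.exp (-(Real.pi * ξ ^ 2) * u ^ 2))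
      (Set.Ioi 0) := by
  have hb : 0 < Real.pi * ξ ^ 2 := by positivity
  exact integrableOn_rpow_mul_exp_neg_mul_sq hb (by linarith)

/-- Convolving an inverse Fourier transform with a product of Gaussians multiplies the
integrand by Gaussians. -/
lemma integral_gk_ftInv {u t : ℝ} (hu : 0 < u) (ht : 0 < t) (x : ℝ × ℝ) {F : ℝ × ℝ → ℂ}
    (hF : Integrable F) :
    ∫ y : ℝ × ℝ, ((gk u (x.1 - y.1) * gk t (x.2 - y.2) : ℝ) : ℂ) * ftInv F y =
      ∫ ξ : ℝ × ℝ, Complex.exp (2 * Real.pi * (x.1 * ξ.1 + x.2 * ξ.2) * Complex.I) *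
        ((Real.exp (-(Real.pi * ξ.1 ^ 2) * u ^ 2) *
          Real.exp (-(Real.pi * ξ.2 ^ 2) * t ^ 2) : ℝ) : ℂ) * F ξ := by
  have hg : ∀ {s : ℝ}, 0 < s → ∀ c : ℝ, Integrable (fun y => gk s (c - y)) := fun hs c =>
    (integrable_gk hs).comp_sub_left c
  have hgg : Integrable (fun y : ℝ × ℝ => gk u (x.1 - y.1) * gk t (x.2 - y.2)) :=
    (hg hu x.1).mul_prod (hg ht x.2)
  have hbig : Integrable (Function.uncurry fun (y ξ : ℝ × ℝ) =>
      ((gk u (x.1 - y.1) * gk t (x.2 - y.2) : ℝ) : ℂ) *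
        (Complex.exp (2 * Real.pi * (y.1 * ξ.1 + y.2 * ξ.2) * Complex.I) * F ξ))
      ((volume : Measure (ℝ × ℝ)).prod volume) := by
    have hdom := hgg.ofReal (𝕜 := ℂ) |>.mul_prod hF
    refine hdom.mono ?_ (Eventually.of_forall fun q => ?_)
    · refine AEStronglyMeasurable.mul ?_ (AEStronglyMeasurable.mul ?_ ?_)
      · exact (hgg.ofReal (𝕜 := ℂ)).1.comp_fst
      · apply Continuous.aestronglyMeasurable; fun_prop
      · exact hF.1.comp_snd
    · simp only [Function.uncurry, norm_mul, norm_phase, one_mul]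
      exact le_rfl
  calc _ = ∫ y : ℝ × ℝ, ∫ ξ : ℝ × ℝ, ((gk u (x.1 - y.1) * gk t (x.2 - y.2) : ℝ) : ℂ) *
        (Complex.exp (2 * Real.pi * (y.1 * ξ.1 + y.2 * ξ.2) * Complex.I) * F ξ) := by
        refine integral_congr_ae (Eventually.of_forall fun y => ?_)
        simp only [ftInv]
        rw [integral_const_mul]
    _ = ∫ ξ : ℝ × ℝ, ∫ y : ℝ × ℝ, ((gk u (x.1 - y.1) * gk t (x.2 - y.2) : ℝ) : ℂ) *
        (Complex.exp (2 * Real.pi * (y.1 * ξ.1 + y.2 * ξ.2) * Complex.I) * F ξ) :=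
        integral_integral_swap hbig
    _ = _ := by
        refine integral_congr_ae (Eventually.of_forall fun ξ => ?_)
        have e : ∀ y : ℝ × ℝ, ((gk u (x.1 - y.1) * gk t (x.2 - y.2) : ℝ) : ℂ) *
            (Complex.exp (2 * Real.pi * (y.1 * ξ.1 + y.2 * ξ.2) * Complex.I) * F ξ) =
            ((gk u (x.1 - y.1) : ℂ) * Complex.exp (2 * Real.pi * (y.1 * ξ.1) * Complex.I)) *
            ((gk t (x.2 - y.2) : ℂ) * Complex.exp (2 * Real.pi * (y.2 * ξ.2) * Complex.I)) *
            F ξ := by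
          intro y
          rw [mul_add, add_mul, Complex.exp_add]; push_cast; ring
        simp_rw [e]
        rw [integral_mul_const, Measure.volume_eq_prod, integral_prod_mul
          (fun y : ℝ => (gk u (x.1 - y) : ℂ) * Complex.exp (2 * Real.pi * (y * ξ.1) * Complex.I))
          (fun y : ℝ => (gk t (x.2 - y) : ℂ) * Complex.exp (2 * Real.pi * (y * ξ.2) * Complex.I)),
          integral_gk_mul_exp hu, integral_gk_mul_exp ht]
        rw [mul_add, add_mul, Complex.exp_add]; push_cast; ring

lemma ae_ne_zero : ∀ᵐ ξ : ℝ × ℝ, ξ.1 ≠ 0 ∧ ξ.2 ≠ 0 := by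
  have h : ∀ᵐ a : ℝ, a ≠ 0 := by simp [ae_iff]
  rw [Measure.volume_eq_prod]
  have h1 := (Measure.quasiMeasurePreserving_fst (μ := (volume : Measure ℝ))
    (ν := (volume : Measure ℝ))).ae h
  have h2 := (Measure.quasiMeasurePreserving_snd (μ := (volume : Measure ℝ))
    (ν := (volume : Measure ℝ))).ae h
  filter_upwards [h1, h2] with ξ a b using ⟨a, b⟩

/-- Superposing the Gaussian multipliers `exp (-π u² ξ²)` over the widths with weights `u^(α-1)`
gives a multiple of `|ξ|^(-α)` in each variable, so it undoes the multiplication by the symbol. -/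
lemma integral_superposition {α : ℝ} (h0 : 0 < α) {w : ℝ × ℝ → ℂ} (hw : Integrable w)
    (hwc : Continuous w) (x : ℝ × ℝ) :
    ∫ q : ℝ × ℝ, ((q.1 ^ (α - 1) * q.2 ^ (α - 1) : ℝ) : ℂ) *
      (∫ ξ : ℝ × ℝ, Complex.exp (2 * Real.pi * (x.1 * ξ.1 + x.2 * ξ.2) * Complex.I) *
        ((Real.exp (-(Real.pi * ξ.1 ^ 2) * q.1 ^ 2) *
          Real.exp (-(Real.pi * ξ.2 ^ 2) * q.2 ^ 2) : ℝ) : ℂ) *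
        (((|ξ.1| ^ α * |ξ.2| ^ α : ℝ) : ℂ) * w ξ))
      ∂((volume.restrict (Set.Ioi 0)).prod (volume.restrict (Set.Ioi 0))) =
    (((Real.pi ^ (-(α / 2)) * (1 / 2) * Real.Gamma (α / 2)) ^ 2 : ℝ) : ℂ) * ftInv w x := by
  set c := Real.pi ^ (-(α / 2)) * (1 / 2) * Real.Gamma (α / 2) with hc
  set ν : Measure ℝ := volume.restrict (Set.Ioi 0) with hν
  set J : ℝ → ℝ → ℝ := fun ξ u => u ^ (α - 1) * Real.exp (-(Real.pi * ξ ^ 2) * u ^ 2) with hJ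
  set E : ℝ × ℝ → ℂ := fun ξ =>
    Complex.exp (2 * Real.pi * (x.1 * ξ.1 + x.2 * ξ.2) * Complex.I) with hE
  set m : ℝ × ℝ → ℝ := fun ξ => |ξ.1| ^ α * |ξ.2| ^ α with hm
  -- the joint integrand, with the Gaussian weights grouped by coordinate
  set Ψ : ℝ × ℝ → ℝ × ℝ → ℂ := fun q ξ =>
    ((J ξ.1 q.1 * J ξ.2 q.2 : ℝ) : ℂ) * (E ξ * ((m ξ : ℂ) * w ξ)) with hΨ
  have hJ2 : ∀ ξ : ℝ × ℝ, ξ.1 ≠ 0 ∧ ξ.2 ≠ 0 →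
      Integrable (fun q : ℝ × ℝ => J ξ.1 q.1 * J ξ.2 q.2) (ν.prod ν) := fun ξ h =>
    Integrable.mul_prod (symbol_integrable h0 h.1) (symbol_integrable h0 h.2)
  have hJint : ∀ ξ : ℝ × ℝ, ξ.1 ≠ 0 ∧ ξ.2 ≠ 0 →
      (∫ q : ℝ × ℝ, J ξ.1 q.1 * J ξ.2 q.2 ∂(ν.prod ν)) * m ξ = c ^ 2 := by
    intro ξ h
    have h1 : 0 < |ξ.1| := abs_pos.2 h.1
    have h2 : 0 < |ξ.2| := abs_pos.2 h.2
    rw [integral_prod_mul (J ξ.1) (J ξ.2)]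
    simp only [hJ, hν, hm]
    rw [symbol_integral h0 h.1, symbol_integral h0 h.2, ← hc, Real.rpow_neg h1.le,
      Real.rpow_neg h2.le]
    have := (Real.rpow_pos_of_pos h1 α).ne'
    have := (Real.rpow_pos_of_pos h2 α).ne'
    field_simp
  have hνpos : ∀ᵐ q : ℝ × ℝ ∂(ν.prod ν), 0 < q.1 ∧ 0 < q.2 := by
    have h : ∀ᵐ a ∂ν, 0 < a := ae_restrict_mem measurableSet_Ioi
    have h1 := (Measure.quasiMeasurePreserving_fst (μ := ν) (ν := ν)).ae h
    have h2 := (Measure.quasiMeasurePreserving_snd (μ := ν) (ν := ν)).ae h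
    filter_upwards [h1, h2] with ξ a b using ⟨a, b⟩
  have hΨm : Measurable (Function.uncurry Ψ) := by
    have := hwc.measurable
    simp only [hΨ, hJ, hE, hm]
    fun_prop
  have hΨi : Integrable (Function.uncurry Ψ) ((ν.prod ν).prod volume) := by
    rw [integrable_prod_iff' hΨm.aestronglyMeasurable]
    constructor
    · filter_upwards [ae_ne_zero] with ξ hξ
      exact ((hJ2 ξ hξ).ofReal (𝕜 := ℂ)).mul_const (E ξ * ((m ξ : ℂ) * w ξ))
    · refine (hw.norm.const_mul (c ^ 2)).congr ?_
      filter_upwards [ae_ne_zero] with ξ hξ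
      rw [← hJint ξ hξ]
      have : ∀ᵐ q : ℝ × ℝ ∂(ν.prod ν), ‖Function.uncurry Ψ (q, ξ)‖ =
          (J ξ.1 q.1 * J ξ.2 q.2) * (m ξ * ‖w ξ‖) := by
        filter_upwards [hνpos] with q hq
        have hj : ∀ a b : ℝ, 0 < b → 0 ≤ J a b := fun a b hb => by
          simp only [hJ]; positivity
        simp only [Function.uncurry, hΨ, norm_mul, Complex.norm_real, Real.norm_eq_abs]
        rw [hE, norm_phase, one_mul, abs_of_nonneg (hj _ _ hq.1), abs_of_nonneg (hj _ _ hq.2),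
          abs_of_nonneg (show 0 ≤ m ξ by simp only [hm]; positivity)]
      rw [integral_congr_ae this, integral_mul_const]
      ring
  calc _ = ∫ q : ℝ × ℝ, ∫ ξ : ℝ × ℝ, Ψ q ξ ∂volume ∂(ν.prod ν) := by
        refine integral_congr_ae (Eventually.of_forall fun q => ?_)
        simp only
        rw [← integral_const_mul]
        refine integral_congr_ae (Eventually.of_forall fun ξ => ?_)
        simp only [hΨ, hJ, hE, hm]
        push_cast; ring
    _ = ∫ ξ : ℝ × ℝ, ∫ q : ℝ × ℝ, Ψ q ξ ∂(ν.prod ν) := integral_integral_swap hΨi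
    _ = ∫ ξ : ℝ × ℝ, ((c ^ 2 : ℝ) : ℂ) * (E ξ * w ξ) := by
        refine integral_congr_ae ?_
        filter_upwards [ae_ne_zero] with ξ hξ
        simp only [hΨ]
        rw [integral_mul_const, integral_complex_ofReal, ← hJint ξ hξ]
        push_cast; ring
    _ = _ := by rw [integral_const_mul]; rfl

/-! ### Pointwise domination and the embedding -/

/-- A test function is dominated pointwise by the fractional integral of its anisotropic derivative
(here with `α = s / 2`). -/
lemma enorm_le_potential {α : ℝ} (h0 : 0 < α) (h1 : α ≤ 1 / 2) :
    ∃ c : ℝ, 0 < c ∧ ∀ f : ℝ × ℝ → ℂ, ContDiff ℝ (⊤ : ℕ∞) f → HasCompactSupport f →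
      Measurable (ftInv (fun p : ℝ × ℝ => ((|p.1| ^ α * |p.2| ^ α : ℝ) : ℂ) * ft f p)) ∧
      ∀ x, ENNReal.ofReal c * ‖f x‖ₑ ≤ ∫⁻ y : ℝ × ℝ,
        kern α (x.1 - y.1) * kern α (x.2 - y.2) *
          ‖ftInv (fun p : ℝ × ℝ => ((|p.1| ^ α * |p.2| ^ α : ℝ) : ℂ) * ft f p) y‖ₑ := by
  have hΓ : 0 < Real.Gamma (α / 2) := Real.Gamma_pos_of_pos (by positivity)
  have hc : 0 < (Real.pi ^ (-(α / 2)) * (1 / 2) * Real.Gamma (α / 2)) ^ 2 := by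
    have := Real.pi_pos
    positivity
  refine ⟨_, hc, fun f hf hcs => ?_⟩
  set F : ℝ × ℝ → ℂ := fun p => ((|p.1| ^ α * |p.2| ^ α : ℝ) : ℂ) * ft f p with hF
  have hFi : Integrable F := integrable_symbol hf hcs h0.le h1
  have hgm : Measurable (ftInv F) := (ftInv_continuous hFi).measurable
  refine ⟨hgm, fun x => ?_⟩
  obtain ⟨-, -, hinv⟩ := exists_schwartz hf hcs
  have key := integral_superposition h0 (integrable_ft hf hcs) (ft_continuous hf hcs) x
  rw [hinv] at key
  set ν : Measure ℝ := volume.restrict (Set.Ioi 0) with hν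
  have hνpos : ∀ᵐ q : ℝ × ℝ ∂(ν.prod ν), 0 < q.1 ∧ 0 < q.2 := by
    have h : ∀ᵐ a ∂ν, 0 < a := ae_restrict_mem measurableSet_Ioi
    have h1 := (Measure.quasiMeasurePreserving_fst (μ := ν) (ν := ν)).ae h
    have h2 := (Measure.quasiMeasurePreserving_snd (μ := ν) (ν := ν)).ae h
    filter_upwards [h1, h2] with ξ a b using ⟨a, b⟩
  have hK : ∀ s : ℝ, Measurable fun u : ℝ => ENNReal.ofReal (u ^ (α - 1) * gk u s) := fun s =>
    (measurable_kern_integrand α).comp (f := fun u : ℝ => (s, u)) (by fun_prop)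
  have hKK : Measurable (Function.uncurry fun q y : ℝ × ℝ =>
      ENNReal.ofReal (q.1 ^ (α - 1) * gk q.1 (x.1 - y.1)) *
        ENNReal.ofReal (q.2 ^ (α - 1) * gk q.2 (x.2 - y.2)) * ‖ftInv F y‖ₑ) := by
    refine Measurable.mul (Measurable.mul ?_ ?_) (hgm.enorm.comp measurable_snd)
    · exact (measurable_kern_integrand α).comp
        (f := fun p : (ℝ × ℝ) × ℝ × ℝ => (x.1 - p.2.1, p.1.1)) (by fun_prop)
    · exact (measurable_kern_integrand α).comp
        (f := fun p : (ℝ × ℝ) × ℝ × ℝ => (x.2 - p.2.2, p.1.2)) (by fun_prop)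
  calc _ = ‖(((Real.pi ^ (-(α / 2)) * (1 / 2) * Real.Gamma (α / 2)) ^ 2 : ℝ) : ℂ) * f x‖ₑ := by
        rw [enorm_mul]
        congr 1
        rw [← ofReal_norm, Complex.norm_real, Real.norm_of_nonneg hc.le]
    _ ≤ ∫⁻ q : ℝ × ℝ, ∫⁻ y : ℝ × ℝ, ENNReal.ofReal (q.1 ^ (α - 1) * gk q.1 (x.1 - y.1)) *
        ENNReal.ofReal (q.2 ^ (α - 1) * gk q.2 (x.2 - y.2)) * ‖ftInv F y‖ₑ ∂volume ∂(ν.prod ν) := by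
        rw [← key]
        refine (enorm_integral_le_lintegral_enorm _).trans (lintegral_mono_ae ?_)
        filter_upwards [hνpos] with q hq
        have hr1 : 0 ≤ q.1 ^ (α - 1) := Real.rpow_nonneg hq.1.le _
        have hr2 : 0 ≤ q.2 ^ (α - 1) := Real.rpow_nonneg hq.2.le _
        rw [← integral_gk_ftInv hq.1 hq.2 x hFi, ← integral_const_mul]
        refine (enorm_integral_le_lintegral_enorm _).trans (lintegral_mono fun y => ?_)
        have hg1 := gk_nonneg hq.1 (x.1 - y.1)
        have hg2 := gk_nonneg hq.2 (x.2 - y.2)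
        rw [← mul_assoc, enorm_mul, ← Complex.ofReal_mul, ← ofReal_norm (_ : ℂ),
          Complex.norm_real, Real.norm_of_nonneg (by positivity),
          ← ENNReal.ofReal_mul (by positivity)]
        apply le_of_eq; congr 2; ring
    _ = ∫⁻ y : ℝ × ℝ, ∫⁻ q : ℝ × ℝ, ENNReal.ofReal (q.1 ^ (α - 1) * gk q.1 (x.1 - y.1)) *
        ENNReal.ofReal (q.2 ^ (α - 1) * gk q.2 (x.2 - y.2)) * ‖ftInv F y‖ₑ ∂(ν.prod ν) :=
        lintegral_lintegral_swap hKK.aemeasurable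
    _ = _ := by
        refine lintegral_congr fun y => ?_
        rw [lintegral_mul_const' _ _ enorm_ne_top,
          lintegral_prod_mul (f := fun u => ENNReal.ofReal (u ^ (α - 1) * gk u (x.1 - y.1)))
            (g := fun u => ENNReal.ofReal (u ^ (α - 1) * gk u (x.2 - y.2)))
            (hK _).aemeasurable (hK _).aemeasurable]
        rfl

/-- **Anisotropic Sobolev embedding**: for `1 < p ≤ q < ∞`, `0 ≤ s < 1` with
`1/q = 1/p − s/2`, one has `‖f‖_{L^q} ≤ C ‖|∂ₓ|^{s/2}|∂_y|^{s/2} f‖_{L^p}` for all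
`f ∈ C_c^∞(ℝ²)`. -/
theorem anisotropic_sobolev (p q s : ℝ) (hp : 1 < p) (hpq : p ≤ q) (hs0 : 0 ≤ s)
    (hs1 : s < 1) (hscal : 1/q = 1/p - s/2) :
    ∃ C : ℝ, 0 < C ∧ ∀ f : ℝ × ℝ → ℂ, ContDiff ℝ (⊤ : ℕ∞) f → HasCompactSupport f →
      eLpNorm f (ENNReal.ofReal q) (volume : Measure (ℝ × ℝ)) ≤
        ENNReal.ofReal C * eLpNorm (anisoDeriv s f) (ENNReal.ofReal p) (volume : Measure (ℝ × ℝ)) := by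
  have hp0 : 0 < p := by linarith
  have hq0 : 0 < q := by linarith
  rcases hs0.eq_or_lt with rfl | hs
  · -- for `s = 0` the exponents agree and the claim is Fourier inversion
    have hqp : q = p := by
      rw [zero_div, sub_zero] at hscal
      simpa using hscal
    refine ⟨1, one_pos, fun f hf hc => ?_⟩
    obtain ⟨-, -, hinv⟩ := exists_schwartz hf hc
    have : anisoDeriv 0 f = f := by
      simpa [anisoDeriv] using hinv
    rw [this, hqp, ENNReal.ofReal_one, one_mul]
  set α := s / 2 with hα
  have h0 : 0 < α := by positivity
  have h1 : α ≤ 1 / 2 := by rw [hα]; linarith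
  have hq1 : 1 < q := by linarith
  -- `r` is the exponent conjugate to `q`
  set r := q / (q - 1) with hr
  have hq1' : 0 < q - 1 := by linarith
  have hr1 : 1 < r := by rw [hr, one_lt_div hq1']; linarith
  have hr0 : 0 < r := by linarith
  have hrq : 1 / r = 1 - 1 / q := by rw [hr]; field_simp
  have hexp : 1 / r + 1 / p = 1 + α := by rw [hrq, hscal]; ring
  obtain ⟨c, hc, Hc⟩ := enorm_le_potential h0 h1
  obtain ⟨C, hC, HC⟩ := form₂_le h0 (by linarith) hr1 hp hexp
  refine ⟨C / c, by positivity, fun f hf hcs => ?_⟩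
  obtain ⟨hgm, hpt⟩ := Hc f hf hcs
  change Measurable (anisoDeriv s f) at hgm
  set g := anisoDeriv s f with hg
  have hfm : Measurable f := hf.continuous.measurable
  have hfL : MemLp f (ENNReal.ofReal q) (volume : Measure (ℝ × ℝ)) :=
    hf.continuous.memLp_of_hasCompactSupport hcs
  have hqn : ENNReal.ofReal q ≠ 0 := by simpa using hq0
  have hpn : ENNReal.ofReal p ≠ 0 := by simpa using hp0
  have hfin := hfL.2
  rw [eLpNorm_eq_lintegral_rpow_enorm_toReal hqn ENNReal.ofReal_ne_top,
    eLpNorm_eq_lintegral_rpow_enorm_toReal hpn ENNReal.ofReal_ne_top,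
    ENNReal.toReal_ofReal hq0.le, ENNReal.toReal_ofReal hp0.le]
  rw [eLpNorm_eq_lintegral_rpow_enorm_toReal hqn ENNReal.ofReal_ne_top,
    ENNReal.toReal_ofReal hq0.le] at hfin
  set N := ∫⁻ x, ‖f x‖ₑ ^ q with hN
  set P := (∫⁻ x, ‖g x‖ₑ ^ p) ^ (1 / p) with hP
  have hNtop : N ≠ ⊤ := by
    intro h
    rw [h, ENNReal.top_rpow_of_pos (by positivity)] at hfin
    exact lt_irrefl _ hfin
  -- below, `N` is cancelled, which needs `0 < N < ∞`
  rcases eq_or_ne N 0 with hN0 | hN0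
  · rw [hN0, ENNReal.zero_rpow_of_pos (by positivity)]; exact zero_le
  -- duality: the bilinear form is tested against `|f|^(q-1)`
  have main : ENNReal.ofReal c * N ≤ ENNReal.ofReal C * (N ^ (1 / r) * P) := by
    have hm1 : Measurable fun z => ‖f z‖ₑ ^ (q - 1) := hfm.enorm.pow_const _
    have hrpow : ∫⁻ z, (‖f z‖ₑ ^ (q - 1)) ^ r = N := by
      refine lintegral_congr fun z => ?_
      rw [← ENNReal.rpow_mul, hr]
      congr 1; field_simp
    calc ENNReal.ofReal c * N
        = ∫⁻ z, ‖f z‖ₑ ^ (q - 1) * (ENNReal.ofReal c * ‖f z‖ₑ) := by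
          rw [hN, ← lintegral_const_mul' _ _ ENNReal.ofReal_ne_top]
          refine lintegral_congr fun z => ?_
          have : ‖f z‖ₑ ^ q = ‖f z‖ₑ ^ (q - 1) * ‖f z‖ₑ := by
            conv_lhs => rw [← sub_add_cancel q 1,
              ENNReal.rpow_add_of_nonneg _ _ hq1'.le zero_le_one, ENNReal.rpow_one]
          rw [this]; ring
      _ ≤ ∫⁻ z, ‖f z‖ₑ ^ (q - 1) *
            ∫⁻ y, kern α (z.1 - y.1) * kern α (z.2 - y.2) * ‖g y‖ₑ := by
          gcongr with z
          exact hpt z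
      _ ≤ _ := by
          refine (HC (fun z => ‖f z‖ₑ ^ (q - 1)) (fun z => ‖g z‖ₑ) hm1 hgm.enorm).trans ?_
          rw [hrpow]
  have hsplit : N = N ^ (1 / r) * N ^ (1 / q) := by
    rw [← ENNReal.rpow_add _ _ hN0 hNtop, hrq, sub_add_cancel, ENNReal.rpow_one]
  have hNr0 : N ^ (1 / r) ≠ 0 := (ENNReal.rpow_pos (pos_iff_ne_zero.2 hN0) hNtop).ne'
  have hNrt : N ^ (1 / r) ≠ ⊤ := ENNReal.rpow_ne_top_of_nonneg (by positivity) hNtop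
  have hdiv : ENNReal.ofReal c * N ^ (1 / q) ≤ ENNReal.ofReal C * P := by
    rw [← ENNReal.mul_le_mul_iff_right hNr0 hNrt]
    calc N ^ (1 / r) * (ENNReal.ofReal c * N ^ (1 / q))
        = ENNReal.ofReal c * (N ^ (1 / r) * N ^ (1 / q)) := by ring
      _ = ENNReal.ofReal c * N := by rw [← hsplit]
      _ ≤ _ := main
      _ = _ := by ring
  have hcne : ENNReal.ofReal c ≠ 0 := by simpa using hc
  rw [← ENNReal.mul_le_mul_iff_right hcne ENNReal.ofReal_ne_top, ← mul_assoc,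
    ← ENNReal.ofReal_mul hc.le, mul_div_cancel₀ _ hc.ne']
  exact hdiv
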